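/- Let T be a compactly generated triangulated category with a generating sequence G, an orthogonal metric R, and an integer A > 0 such that for every i ∈ ℤ and every F ∈ R_i there is a distinguished triangle E → F → D → ΣE with D ∈ R_{i+1} and E ∈ Ḡ^{[-A-i,A-i]}. Then: (1) for integers i < j and any F ∈ R_i there is a triangle E → F → D → ΣE with E ∈ Ḡ^{[-A-j+1,A-i]} and D ∈ R_j; and (2) for any F ∈ R_i there is a sequence E_1 → E_2 → E_3 → ⋯ with compatible maps to F such that for each n ≥ 1 there is a triangle E_n → F → D_n → ΣE_n with E_n ∈ Ḡ^{[-A-n-i+1,A-i]} and D_n ∈ R_{i+n}. If moreover in the hypothesis one may always take E ∈ Ḡ^{[-A-i,A-i]}_A, then in (1) one may take E ∈ Ḡ^{[-A-j+1,A-i]}_{(j-i)A} and in (2) one may take E_n ∈ Ḡ^{[-A-n-i+1,A-i]}_{nA}. -/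

import Mathlib

namespace GApprox

open CategoryTheory CategoryTheory.Limits CategoryTheory.Pretriangulated

universe w v u

variable (C : Type u) [Category.{v} C] [HasZeroObject C] [HasShift C ℤ]
  [Preadditive C] [∀ n : ℤ, (shiftFunctor C n).Additive] [Pretriangulated C]
  [HasCoproducts.{v} C]

/-- The right orthogonal of a class of objects. -/
def rOrth (A : Set C) : Set C := {X | ∀ a ∈ A, ∀ f : a ⟶ X, f = 0}

/-- The left orthogonal of a class of objects. -/
def lOrth (A : Set C) : Set C := {X | ∀ a ∈ A, ∀ f : X ⟶ a, f = 0}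

/-- `Hom(A, B) = 0`. -/
def homZero (A B : Set C) : Prop := ∀ a ∈ A, ∀ b ∈ B, ∀ f : a ⟶ b, f = 0

/-- The star operation `A ⋆ B`: objects `Y` admitting a distinguished triangle
`X ⟶ Y ⟶ Z ⟶ ΣX` with `X ∈ A` and `Z ∈ B`. -/
def starSet (A B : Set C) : Set C :=
  {Y | ∃ (X Z : C) (f : X ⟶ Y) (g : Y ⟶ Z) (h : Z ⟶ X⟦(1 : ℤ)⟧),
    Triangle.mk f g h ∈ (distTriang C) ∧ X ∈ A ∧ Z ∈ B}

/-- The (strictly full) shift `Σⁿ A` of a class of objects. -/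
def shiftSet (n : ℤ) (A : Set C) : Set C :=
  {X | ∃ a ∈ A, Nonempty (X ≅ (shiftFunctor C n).obj a)}

/-- An object is compact if any map to a coproduct factors through a finite subcoproduct. -/
def IsCompactObj (X : C) : Prop :=
  ∀ (α : Type v) (f : α → C) (g : X ⟶ ∐ f),
    ∃ (s : Finset α) (h : X ⟶ ∐ (fun i : {a : α // a ∈ s} => f i.1)),
      g = h ≫ Sigma.desc (fun i => Sigma.ι f i.1)

/-- The class of compact objects `T^c`. -/
def compacts : Set C := {X | IsCompactObj C X}

/-- The category is compactly generated. -/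
def CompactlyGenerated : Prop :=
  ∀ X : C, (∀ K ∈ compacts C, ∀ f : K ⟶ X, f = 0) → IsZero X

/-- Closure under direct summands (retracts), `smd`. -/
def smd (A : Set C) : Set C :=
  {X | ∃ Y ∈ A, ∃ (i : X ⟶ Y) (r : Y ⟶ X), i ≫ r = 𝟙 X}

/-- Closure of a class of objects under finite direct sums and extensions (`coprod`). -/
inductive extClosure (U : Set C) : C → Prop
  | of {X : C} : X ∈ U → extClosure U X
  | zero {X : C} : IsZero X → extClosure U X
  | ext {X Y Z : C} (f : X ⟶ Y) (g : Y ⟶ Z) (h : Z ⟶ X⟦(1 : ℤ)⟧) :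
      Triangle.mk f g h ∈ (distTriang C) → extClosure U X → extClosure U Z → extClosure U Y

/-- Closure of a class of objects under arbitrary coproducts, extensions and
direct summands. -/
inductive bigClosure (U : Set C) : C → Prop
  | of {X : C} : X ∈ U → bigClosure U X
  | zero {X : C} : IsZero X → bigClosure U X
  | coprod {α : Type v} (f : α → C) :
      (∀ i, bigClosure U (f i)) → ∀ {X : C}, (X ≅ ∐ f) → bigClosure U X
  | ext {X Y Z : C} (f : X ⟶ Y) (g : Y ⟶ Z) (h : Z ⟶ X⟦(1 : ℤ)⟧) :
      Triangle.mk f g h ∈ (distTriang C) → bigClosure U X → bigClosure U Z → bigClosure U Y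
  | retract {X Y : C} (i : X ⟶ Y) (r : Y ⟶ X) :
      i ≫ r = 𝟙 X → bigClosure U Y → bigClosure U X

/-- Closure of a class of objects under finite direct sums, `add`. -/
def addClosure (U : Set C) : Set C :=
  {X | ∃ (n : ℕ) (f : ULift.{v} (Fin n) → C), (∀ i, f i ∈ U) ∧ Nonempty (X ≅ ∐ f)}

/-- Closure of a class of objects under arbitrary coproducts, `Add`. -/
def bigAddClosure (U : Set C) : Set C :=
  {X | ∃ (α : Type v) (f : α → C), (∀ i, f i ∈ U) ∧ Nonempty (X ≅ ∐ f)}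

/-- `coprod_n(U)`. -/
def coprodPow (U : Set C) : ℕ → Set C
  | 0 => {X | IsZero X}
  | n + 1 => starSet C (addClosure C U) (coprodPow U n)

/-- `Coprod_n(U)`. -/
def coprodPowBig (U : Set C) : ℕ → Set C
  | 0 => {X | IsZero X}
  | n + 1 => starSet C (bigAddClosure C U) (coprodPowBig U n)

/-- `G[a,b] = ∪ { G^m : a ≤ m ≤ b }`. -/
def unionIcc (G : ℤ → Set C) (a b : ℤ) : Set C := ⋃ m ∈ Set.Icc a b, G m

/-- `G(-∞,b] = ∪ { G^m : m ≤ b }`. -/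
def unionIic (G : ℤ → Set C) (b : ℤ) : Set C := ⋃ m ∈ Set.Iic b, G m

/-- `G(-∞,∞) = ∪ { G^m : m ∈ ℤ }`. -/
def unionAll (G : ℤ → Set C) : Set C := ⋃ m : ℤ, G m

/-- `G^{[a,b]} = smd(coprod(G[a,b]))`. -/
def gInt (G : ℤ → Set C) (a b : ℤ) : Set C :=
  smd C {X | extClosure C (unionIcc C G a b) X}

/-- `G^{(-∞,b]} = smd(coprod(G(-∞,b]))`. -/
def gIic (G : ℤ → Set C) (b : ℤ) : Set C :=
  smd C {X | extClosure C (unionIic C G b) X}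

/-- `G^{[a,b]}_k = smd(coprod_k(G[a,b]))`. -/
def gIntPow (G : ℤ → Set C) (a b k : ℤ) : Set C :=
  smd C (coprodPow C (unionIcc C G a b) k.toNat)

/-- `Ḡ^{[a,b]}`. -/
def gBarInt (G : ℤ → Set C) (a b : ℤ) : Set C :=
  {X | bigClosure C (unionIcc C G a b) X}

/-- `Ḡ^{(-∞,b]}`. -/
def gBarIic (G : ℤ → Set C) (b : ℤ) : Set C :=
  {X | bigClosure C (unionIic C G b) X}

/-- `Ḡ^{[a,b]}_k = smd(Coprod_k(G[a,b]))`. -/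
def gBarIntPow (G : ℤ → Set C) (a b k : ℤ) : Set C :=
  smd C (coprodPowBig C (unionIcc C G a b) k.toNat)

/-- `M^G_n := G^{(-∞,-n]}`. -/
def MG (G : ℤ → Set C) (n : ℤ) : Set C := gIic C G (-n)

/-- `R^G_n := ⊥((M^G_n)^⊥)`, orthogonals taken in the whole category. -/
def RG (G : ℤ → Set C) (n : ℤ) : Set C := lOrth C (rOrth C (MG C G n))

/-- A pre-generating sequence. -/
structure IsPreGenSeq (G : ℤ → Set C) : Prop where
  compact : ∀ i : ℤ, G i ⊆ compacts C
  generates : smd C {X | extClosure C (unionAll C G) X} = compacts C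

/-- A generating sequence. -/
structure IsGenSeq (G : ℤ → Set C) extends IsPreGenSeq C G : Prop where
  shift_cond : ∀ n : ℤ,
    shiftSet C (-1) (G n) ∪ G n ∪ shiftSet C 1 (G n) ⊆ gInt C G (n - 1) (n + 1)

/-- A finite generating sequence. -/
structure IsFinGenSeq (G : ℤ → Set C) extends IsGenSeq C G : Prop where
  finite : ∀ i : ℤ, (G i).Finite

/-- ℕ-equivalence of generating sequences. -/
def GenSeqNEquiv (G G' : ℤ → Set C) : Prop :=
  ∃ N : ℤ, 0 ≤ N ∧ (∀ n : ℤ, G' n ⊆ gInt C G (n - N) (n + N)) ∧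
    ∀ n : ℤ, G n ⊆ gInt C G' (n - N) (n + N)

/-- ℕ-equivalence of (extended good) metrics. -/
def MetricNEquiv (M N : ℤ → Set C) : Prop :=
  ∃ n : ℤ, 0 ≤ n ∧ (∀ i : ℤ, M (i + n) ⊆ N i) ∧ ∀ i : ℤ, N (i + n) ⊆ M i

/-- An extended good metric. -/
structure IsExtGoodMetric (M : ℤ → Set C) : Prop where
  zero_mem : ∀ (n : ℤ) (X : C), IsZero X → X ∈ M n
  iso_closed : ∀ (n : ℤ) ⦃X Y : C⦄, (X ≅ Y) → X ∈ M n → Y ∈ M n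
  star_subset : ∀ n : ℤ, starSet C (M n) (M n) ⊆ M n
  shift_one : ∀ n : ℤ, shiftSet C 1 (M (n + 1)) ⊆ M n
  antitone : ∀ n : ℤ, M (n + 1) ⊆ M n
  shift_neg_one : ∀ n : ℤ, shiftSet C (-1) (M (n + 1)) ⊆ M n

/-- An orthogonal metric. -/
structure IsOrthMetric (M : ℤ → Set C) extends IsExtGoodMetric C M : Prop where
  orth : ∀ n : ℤ, lOrth C (rOrth C (M n)) = M n

/-- The closure of the compacts `T̄^c := ∩ₙ T^c ⋆ Rₙ`. -/
def closCompacts (Rm : ℤ → Set C) : Set C := ⋂ n : ℤ, starSet C (compacts C) (Rm n)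

/-- `(T, R, A)` is `G`-preapproximable. -/
structure IsGPreApprox (G Rm : ℤ → Set C) (A : ℤ) : Prop where
  orthMetric : IsOrthMetric C Rm
  A_pos : 0 < A
  cond0 : ∀ i : ℤ, MG C G i ⊆ ⋃ n ∈ {n : ℤ | |n| ≤ A}, shiftSet C n (MG C G (i + 1))
  cond1 : ∀ i : ℤ, MG C G (i + A) ⊆ Rm i ∩ compacts C
  cond2 : ∀ n : ℤ, ∃ N : ℤ, ∀ i : ℤ, N ≤ i → homZero C (G n) (Rm i)

/-- There is a distinguished triangle `E ⟶ F ⟶ D ⟶ ΣE` with `E ∈ S` and `D ∈ D`. -/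
def approxTriangle (F : C) (S D : Set C) : Prop :=
  ∃ (E Dd : C) (f : E ⟶ F) (g : F ⟶ Dd) (h : Dd ⟶ E⟦(1 : ℤ)⟧),
    Triangle.mk f g h ∈ (distTriang C) ∧ E ∈ S ∧ Dd ∈ D

/-- `(T, R, A)` is weakly `G`-approximable. -/
structure IsWeakGApprox (G Rm : ℤ → Set C) (A : ℤ) extends IsGPreApprox C G Rm A : Prop where
  hom_vanish : ∀ n i : ℤ, A ≤ n + i → homZero C (G n) (Rm i)
  approx : ∀ i : ℤ, ∀ F ∈ Rm i,
    approxTriangle C F (gBarInt C G (-A - i) (A - i)) (Rm (i + 1))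

/-- `(T, R, A)` is `G`-approximable. -/
structure IsGApprox (G Rm : ℤ → Set C) (A : ℤ) extends IsWeakGApprox C G Rm A : Prop where
  approx' : ∀ i : ℤ, ∀ F ∈ Rm i,
    approxTriangle C F (gBarIntPow C G (-A - i) (A - i) A) (Rm (i + 1))

/-- `(T, R, A)` is weakly `G`-quasiapproximable. -/
structure IsWeakGQuasiApprox (G Rm : ℤ → Set C) (A : ℤ) extends IsGPreApprox C G Rm A : Prop where
  hom_vanish : ∀ n i : ℤ, A ≤ n + i → homZero C (G n) (Rm i)
  approx : ∀ i : ℤ, ∀ F ∈ Rm i ∩ closCompacts C Rm,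
    approxTriangle C F (gBarInt C G (-A - i) (A - i)) (Rm (i + 1) ∩ closCompacts C Rm)

/-- `(T, R, A)` is `G`-quasiapproximable. -/
structure IsGQuasiApprox (G Rm : ℤ → Set C) (A : ℤ) extends IsWeakGQuasiApprox C G Rm A : Prop where
  approx' : ∀ i : ℤ, ∀ F ∈ Rm i ∩ closCompacts C Rm,
    approxTriangle C F (gBarIntPow C G (-A - i) (A - i) A) (Rm (i + 1) ∩ closCompacts C Rm)

/-- The coproduct of a sequence of objects. -/
noncomputable def seqCoprod (E : ℕ → C) : C := ∐ (fun n : ULift.{v} ℕ => E n.down)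

/-- The canonical inclusion into the coproduct of a sequence. -/
noncomputable def seqInj (E : ℕ → C) (n : ℕ) : E n ⟶ seqCoprod C E :=
  Sigma.ι (fun n : ULift.{v} ℕ => E n.down) (ULift.up n)

/-- The map `1 - shift` on the coproduct of a sequence. -/
noncomputable def oneMinusShift (E : ℕ → C) (e : ∀ n, E n ⟶ E (n + 1)) :
    seqCoprod C E ⟶ seqCoprod C E :=
  Sigma.desc (fun n => seqInj C E n.down - e n.down ≫ seqInj C E (n.down + 1))

/-- `H`, equipped with `π`, `δ`, is a homotopy colimit of the sequence `E`. -/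
def IsHocolim (E : ℕ → C) (e : ∀ n, E n ⟶ E (n + 1)) (H : C)
    (π : seqCoprod C E ⟶ H) (δ : H ⟶ (seqCoprod C E)⟦(1 : ℤ)⟧) : Prop :=
  Triangle.mk (oneMinusShift C E e) π δ ∈ (distTriang C)

/-- A single compact generator. -/
def IsCompactGenerator (G₀ : C) : Prop :=
  IsCompactObj C G₀ ∧ ∀ X : C, (∀ n : ℤ, ∀ f : (shiftFunctor C n).obj G₀ ⟶ X, f = 0) → IsZero X

/-- The strictly full subcategory `{Σʲ G₀}`. -/
def singletonShift (G₀ : C) (j : ℤ) : Set C :=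
  {X | Nonempty (X ≅ (shiftFunctor C j).obj G₀)}

/-- The generating sequence `Gⁿ := {Σ⁻ⁿ G₀}`. -/
def genSeqNeg (G₀ : C) (n : ℤ) : Set C := singletonShift C G₀ (-n)

/-- The generating sequence `Gⁿ := {Σⁿ G₀}`. -/
def genSeqPos (G₀ : C) (n : ℤ) : Set C := singletonShift C G₀ n

/-!
Whether the cone of a morphism lies in `⊥𝒴` can be read off from the maps it induces on `Hom(-, Y)`,
`Y ∈ 𝒴`; take `𝒴 = R_i^⊥`. Hence, for a map of triangles that is the identity on one vertex, the
four lemma transports the condition that the cone lies in `⊥𝒴` between the other two vertices. This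
takes the place of the octahedral axiom, which is not part of `Pretriangulated`.

An approximation `φ : E ⟶ F` with cone in `R_i` is improved as follows. When `E = 0`, the object `F`
itself lies in `R_i` and the hypothesis applies to it. Extensions and retracts in the first variable
preserve the ability to improve: for `X ⟶ E ⟶ E₁` one improves the map from `E₁` to the cone of
`X ⟶ F` and pulls back. For `Ḡ` the extension `E ⟶ E ⟶ 0` suffices; for `Coprod_n` one peels off
one coproduct at a time, so that the lengths add up without associativity of `⋆`.
-/

lemma unionIcc_mono {T : Type*} (G : ℤ → Set T) {a b a' b' : ℤ} (ha : a' ≤ a) (hb : b ≤ b') :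
    unionIcc T G a b ⊆ unionIcc T G a' b' :=
  Set.biUnion_subset_biUnion_left (Set.Icc_subset_Icc ha hb)

open Preadditive in
lemma leftComp_comp_leftComp {T : Type u} [Category.{v} T] [Preadditive T] {X Y Z : T} (W : T)
    (f : X ⟶ Y) (g : Y ⟶ Z) :
    (leftComp W f).comp (leftComp W g) = leftComp W (f ≫ g) := by
  ext k
  exact (Category.assoc f g k).symm

section Closures

variable {T : Type u} [Category.{v} T]

lemma smd_mono {S S' : Set T} (h : S ⊆ S') : smd T S ⊆ smd T S' :=
  fun _ ⟨Y, hY, hXY⟩ => ⟨Y, h hY, hXY⟩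

lemma smd_smd_subset (S : Set T) : smd T (smd T S) ⊆ smd T S := by
  rintro X ⟨Y, ⟨Z, hZ, j, s, hjs⟩, i, r, hir⟩
  exact ⟨Z, hZ, i ≫ j, s ≫ r, by simp [reassoc_of% hjs, hir]⟩

variable [HasZeroObject T] [HasShift T ℤ] [Preadditive T]
  [∀ n : ℤ, (shiftFunctor T n).Additive] [Pretriangulated T]

lemma approxTriangle.mono_left {F : T} {S S' Q : Set T} (hS : S ⊆ S')
    (h : approxTriangle T F S Q) : approxTriangle T F S' Q := by
  obtain ⟨E, D, f, g, δ, hT, hE, hD⟩ := h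
  exact ⟨E, D, f, g, δ, hT, hS hE, hD⟩

open scoped ZeroObject in
lemma subset_starSet_isZero (S : Set T) : S ⊆ starSet T S {X | IsZero X} :=
  fun X hX => ⟨X, 0, 𝟙 X, 0, 0, contractible_distinguished X, hX, isZero_zero T⟩

end Closures

section Coproducts

variable {T : Type u} [Category.{v} T] [HasZeroObject T] [HasShift T ℤ] [Preadditive T]
  [∀ n : ℤ, (shiftFunctor T n).Additive] [Pretriangulated T] [HasCoproducts.{v} T]

lemma bigClosure_mono {U V : Set T} (h : U ⊆ V) {X : T} (hX : bigClosure T U X) :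
    bigClosure T V X := by
  induction hX with
  | of hX => exact .of (h hX)
  | zero hX => exact .zero hX
  | coprod f _ e ih => exact .coprod f ih e
  | ext f g k hT _ _ ihX ihZ => exact .ext f g k hT ihX ihZ
  | retract i r hir _ ih => exact .retract i r hir ih

lemma starSet_bigClosure_subset (U : Set T) :
    starSet T {X | bigClosure T U X} {X | bigClosure T U X} ⊆ {X | bigClosure T U X} := by
  rintro Y ⟨X, Z, f, g, δ, hT, hX, hZ⟩
  exact .ext f g δ hT hX hZ

lemma coprodPowBig_mono {U V : Set T} (h : U ⊆ V) (n : ℕ) :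
    coprodPowBig T U n ⊆ coprodPowBig T V n := by
  induction n with
  | zero => exact subset_rfl
  | succ n ih =>
    rintro Y ⟨X, Z, f, g, δ, hT, ⟨α, t, ht, e⟩, hZ⟩
    exact ⟨X, Z, f, g, δ, hT, ⟨α, t, fun i => h (ht i), e⟩, ih hZ⟩

lemma gBarInt_mono (G : ℤ → Set T) {a b a' b' : ℤ} (ha : a' ≤ a) (hb : b ≤ b') :
    gBarInt T G a b ⊆ gBarInt T G a' b' :=
  fun _ => bigClosure_mono (unionIcc_mono G ha hb)

lemma gBarIntPow_mono (G : ℤ → Set T) {a b a' b' : ℤ} (k : ℤ) (ha : a' ≤ a) (hb : b ≤ b') :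
    gBarIntPow T G a b k ⊆ gBarIntPow T G a' b' k :=
  smd_mono (coprodPowBig_mono (unionIcc_mono G ha hb) _)

end Coproducts

section

variable {T : Type u} [Category.{v} T] [HasZeroObject T] [HasShift T ℤ] [Preadditive T]
  [∀ n : ℤ, (shiftFunctor T n).Additive] [Pretriangulated T]

section TriangleMaps

variable {X E E₁ F F₁ : T} {x : X ⟶ E} {p : E ⟶ E₁} {δ : E₁ ⟶ X⟦(1 : ℤ)⟧}
  {y : X ⟶ F} {q : F ⟶ F₁} {ε : F₁ ⟶ X⟦(1 : ℤ)⟧}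

lemma exists_hom₃_of_distTriang (hE : Triangle.mk x p δ ∈ distTriang T)
    (hF : Triangle.mk y q ε ∈ distTriang T) (φ : E ⟶ F) (hxφ : x ≫ φ = y) :
    ∃ u : E₁ ⟶ F₁, p ≫ u = φ ≫ q ∧ u ≫ ε = δ := by
  obtain ⟨u, hpu, huε⟩ : ∃ u : E₁ ⟶ F₁, p ≫ u = φ ≫ q ∧ δ ≫ (𝟙 X)⟦(1 : ℤ)⟧' = u ≫ ε :=
    complete_distinguished_triangle_morphism _ _ hE hF (𝟙 X) φ
      (hxφ.trans (Category.id_comp y).symm)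
  exact ⟨u, hpu, by rw [← huε, CategoryTheory.Functor.map_id, Category.comp_id]⟩

lemma exists_hom₂_of_distTriang (hE : Triangle.mk x p δ ∈ distTriang T)
    (hF : Triangle.mk y q ε ∈ distTriang T) (u : E₁ ⟶ F₁) (huε : u ≫ ε = δ) :
    ∃ φ : E ⟶ F, x ≫ φ = y ∧ p ≫ u = φ ≫ q := by
  have hδ : δ ≫ (𝟙 X)⟦(1 : ℤ)⟧' = u ≫ ε := by
    rw [CategoryTheory.Functor.map_id, Category.comp_id, huε]
  obtain ⟨φ, hφ, hφ'⟩ := complete_distinguished_triangle_morphism₂ _ _ hE hF (𝟙 X) u hδ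
  exact ⟨φ, hφ.trans (Category.id_comp y), hφ'⟩

lemma mem_smd_of_mono (hE : Triangle.mk x p δ ∈ distTriang T) [Mono x] {S : Set T} (hS : E ∈ S) :
    E₁ ∈ smd T S := by
  have hδ : δ = 0 := Triangle.mor₃_eq_zero_of_mono₁ _ hE ‹_›
  obtain ⟨s, hs⟩ : ∃ s : E₁ ⟶ E, 𝟙 E₁ = s ≫ p :=
    Triangle.coyoneda_exact₃ _ hE (𝟙 E₁) ((Category.id_comp δ).trans hδ)
  exact ⟨E, hS, s, p, hs.symm⟩

lemma starSet_smd_subset (S S' : Set T) :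
    starSet T S (smd T S') ⊆ smd T (starSet T S S') := by
  rintro Y ⟨X, Z, f, g, δ, hY, hX, Z', hZ', i, r, hir⟩
  obtain ⟨Y', f', g', hY'⟩ := distinguished_cocone_triangle₂ (r ≫ δ)
  obtain ⟨a, hfa, hia⟩ := exists_hom₂_of_distTriang hY hY' i (by rw [reassoc_of% hir])
  obtain ⟨b, hfb, hrb⟩ := exists_hom₂_of_distTriang hY' hY r rfl
  -- `a ≫ b` is an endomorphism of the triangle of `Y` that is the identity on `X` and on `Z`.
  have hf : f ≫ a ≫ b = 𝟙 X ≫ f := by rw [reassoc_of% hfa, hfb, Category.id_comp]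
  have hg : g ≫ 𝟙 Z = (a ≫ b) ≫ g := by rw [Category.assoc, ← hrb, ← reassoc_of% hia, hir]
  have hδ : δ ≫ (𝟙 X)⟦(1 : ℤ)⟧' = 𝟙 Z ≫ δ := by
    rw [CategoryTheory.Functor.map_id, Category.comp_id, Category.id_comp]
  let ψ : Triangle.mk f g δ ⟶ Triangle.mk f g δ :=
    Triangle.homMk _ _ (𝟙 X) (a ≫ b) (𝟙 Z) hf hg hδ
  have : IsIso (a ≫ b) := isIso₂_of_isIso₁₃ ψ hY hY (inferInstanceAs (IsIso (𝟙 X)))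
    (inferInstanceAs (IsIso (𝟙 Z)))
  exact ⟨Y', ⟨X, Z', f', g', _, hY', hX, hZ'⟩, a, b ≫ inv (a ≫ b), by
    rw [← Category.assoc, IsIso.hom_inv_id]⟩

end TriangleMaps

section LongExactSequence

open Preadditive

variable {X Y Z : T} {f : X ⟶ Y} {g : Y ⟶ Z} {h : Z ⟶ X⟦(1 : ℤ)⟧}
  (hT : Triangle.mk f g h ∈ distTriang T) (W : T)

include hT

lemma exact_leftComp₂ : Function.Exact (leftComp W g) (leftComp W f) := by
  refine fun k => ⟨fun hk => ?_, ?_⟩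
  · obtain ⟨l, hl⟩ := Triangle.yoneda_exact₂ _ hT k hk
    exact ⟨l, hl.symm⟩
  · rintro ⟨l, rfl⟩
    exact (comp_distTriang_mor_zero₁₂_assoc _ hT l).trans zero_comp

lemma exact_leftComp₃ : Function.Exact (leftComp W h) (leftComp W g) :=
  exact_leftComp₂ (rot_of_distTriang _ hT) W

lemma exact_leftComp_shift₁ : Function.Exact (leftComp W (f⟦(1 : ℤ)⟧')) (leftComp W h) := by
  have hrot : Function.Exact (leftComp W (-f⟦(1 : ℤ)⟧')) (leftComp W h) :=
    exact_leftComp₃ (rot_of_distTriang _ hT) W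
  exact fun k => (hrot k).trans <| (Equiv.neg _).exists_congr fun l => by simp [leftComp]

lemma exact_leftComp_shift₂ :
    Function.Exact (leftComp W (g⟦(1 : ℤ)⟧')) (leftComp W (f⟦(1 : ℤ)⟧')) := by
  have hrot : Function.Exact (leftComp W (g⟦(1 : ℤ)⟧')) (leftComp W (-f⟦(1 : ℤ)⟧')) :=
    exact_leftComp_shift₁ (rot_of_distTriang _ hT) W
  intro k
  rw [← hrot k]
  simp [leftComp]

lemma exact_leftComp_shift₃ :
    Function.Exact (leftComp W (h⟦(1 : ℤ)⟧')) (leftComp W (g⟦(1 : ℤ)⟧')) :=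
  exact_leftComp_shift₂ (rot_of_distTriang _ hT) W

end LongExactSequence

/-- The morphism `φ` has a cone in the class `Q`: it is an approximation of its target with error
in `Q`. As `Q` need not be closed under isomorphism, only some cone is required to be in it. -/
def HasConeIn (Q : Set T) {E F : T} (φ : E ⟶ F) : Prop :=
  ∃ (D : T) (g : F ⟶ D) (h : D ⟶ E⟦(1 : ℤ)⟧), Triangle.mk φ g h ∈ distTriang T ∧ D ∈ Q

section Cones

open Preadditive

variable {𝒴 : Set T}

lemma mem_lOrth_iff_of_distTriang {E F D : T} {φ : E ⟶ F} {g : F ⟶ D} {h : D ⟶ E⟦(1 : ℤ)⟧}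
    (hT : Triangle.mk φ g h ∈ distTriang T) :
    D ∈ lOrth T 𝒴 ↔ ∀ Y ∈ 𝒴, Function.Injective (leftComp Y φ) ∧
      Function.Surjective (leftComp Y (φ⟦(1 : ℤ)⟧')) := by
  refine forall₂_congr fun Y _ => ⟨fun hD => ⟨?_, fun k => ?_⟩, fun ⟨hinj, hsurj⟩ s => ?_⟩
  · rw [injective_iff_map_eq_zero]
    intro k hk
    obtain ⟨l, rfl⟩ := (exact_leftComp₂ hT Y k).1 hk
    rw [hD l, map_zero]
  · exact (exact_leftComp_shift₁ hT Y k).1 (hD _)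
  · have hs : leftComp Y g s = 0 :=
      hinj (((exact_leftComp₂ hT Y).apply_apply_eq_zero s).trans (map_zero _).symm)
    obtain ⟨k, rfl⟩ := (exact_leftComp₃ hT Y s).1 hs
    obtain ⟨l, rfl⟩ := hsurj k
    exact (exact_leftComp_shift₁ hT Y).apply_apply_eq_zero l

lemma hasConeIn_lOrth_iff {E F : T} {φ : E ⟶ F} :
    HasConeIn (lOrth T 𝒴) φ ↔ ∀ Y ∈ 𝒴, Function.Injective (leftComp Y φ) ∧
      Function.Surjective (leftComp Y (φ⟦(1 : ℤ)⟧')) := by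
  constructor
  · rintro ⟨D, g, h, hT, hD⟩
    exact (mem_lOrth_iff_of_distTriang hT).1 hD
  · intro hφ
    obtain ⟨D, g, h, hT⟩ := distinguished_cocone_triangle φ
    exact ⟨D, g, h, hT, (mem_lOrth_iff_of_distTriang hT).2 hφ⟩

variable {X E E₁ F F₁ : T} {x : X ⟶ E} {p : E ⟶ E₁} {δ : E₁ ⟶ X⟦(1 : ℤ)⟧}
  {y : X ⟶ F} {q : F ⟶ F₁} {ε : F₁ ⟶ X⟦(1 : ℤ)⟧} {φ : E ⟶ F} {u : E₁ ⟶ F₁}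

lemma HasConeIn.hom₂_of_hom₃ (hu : HasConeIn (lOrth T 𝒴) u)
    (hE : Triangle.mk x p δ ∈ distTriang T) (hF : Triangle.mk y q ε ∈ distTriang T)
    (hxφ : x ≫ φ = y) (hpu : p ≫ u = φ ≫ q) (huε : u ≫ ε = δ) :
    HasConeIn (lOrth T 𝒴) φ := by
  rw [hasConeIn_lOrth_iff] at hu ⊢
  refine fun Y hY => ⟨?_, ?_⟩
  · exact AddMonoidHom.injective_of_surjective_of_injective_of_injective
      (leftComp Y ε) (leftComp Y q) (leftComp Y y) (leftComp Y δ) (leftComp Y p) (leftComp Y x)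
      (AddMonoidHom.id _) (leftComp Y u) (leftComp Y φ) (AddMonoidHom.id _)
      (by simp [leftComp_comp_leftComp, huε]) (by simp [leftComp_comp_leftComp, hpu])
      (by simp [leftComp_comp_leftComp, hxφ])
      (exact_leftComp₃ hF Y) (exact_leftComp₂ hF Y) (exact_leftComp₃ hE Y)
      Function.surjective_id (hu Y hY).1 Function.injective_id
  · exact AddMonoidHom.surjective_of_surjective_of_surjective_of_injective
      (leftComp Y (q⟦(1 : ℤ)⟧')) (leftComp Y (y⟦(1 : ℤ)⟧')) (leftComp Y ε)
      (leftComp Y (p⟦(1 : ℤ)⟧')) (leftComp Y (x⟦(1 : ℤ)⟧')) (leftComp Y δ)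
      (leftComp Y (u⟦(1 : ℤ)⟧')) (leftComp Y (φ⟦(1 : ℤ)⟧')) (AddMonoidHom.id _) (leftComp Y u)
      (by simp only [leftComp_comp_leftComp, ← Functor.map_comp, hpu])
      (by simp [leftComp_comp_leftComp, ← Functor.map_comp, hxφ])
      (by simp [leftComp_comp_leftComp, huε])
      (exact_leftComp_shift₁ hF Y) (exact_leftComp_shift₂ hE Y) (exact_leftComp_shift₁ hE Y)
      (hu Y hY).2 Function.surjective_id (hu Y hY).1

lemma HasConeIn.hom₃_of_hom₂ (hφ : HasConeIn (lOrth T 𝒴) φ)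
    (hE : Triangle.mk x p δ ∈ distTriang T) (hF : Triangle.mk y q ε ∈ distTriang T)
    (hxφ : x ≫ φ = y) (hpu : p ≫ u = φ ≫ q) (huε : u ≫ ε = δ) :
    HasConeIn (lOrth T 𝒴) u := by
  rw [hasConeIn_lOrth_iff] at hφ ⊢
  refine fun Y hY => ⟨?_, ?_⟩
  · exact AddMonoidHom.injective_of_surjective_of_injective_of_injective
      (leftComp Y (y⟦(1 : ℤ)⟧')) (leftComp Y ε) (leftComp Y q)
      (leftComp Y (x⟦(1 : ℤ)⟧')) (leftComp Y δ) (leftComp Y p)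
      (leftComp Y (φ⟦(1 : ℤ)⟧')) (AddMonoidHom.id _) (leftComp Y u) (leftComp Y φ)
      (by simp [leftComp_comp_leftComp, ← Functor.map_comp, hxφ])
      (by simp [leftComp_comp_leftComp, huε]) (by simp [leftComp_comp_leftComp, hpu])
      (exact_leftComp_shift₁ hF Y) (exact_leftComp₃ hF Y) (exact_leftComp_shift₁ hE Y)
      (hφ Y hY).2 Function.injective_id (hφ Y hY).1
  · exact AddMonoidHom.surjective_of_surjective_of_surjective_of_injective
      (leftComp Y (ε⟦(1 : ℤ)⟧')) (leftComp Y (q⟦(1 : ℤ)⟧')) (leftComp Y (y⟦(1 : ℤ)⟧'))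
      (leftComp Y (δ⟦(1 : ℤ)⟧')) (leftComp Y (p⟦(1 : ℤ)⟧')) (leftComp Y (x⟦(1 : ℤ)⟧'))
      (AddMonoidHom.id _) (leftComp Y (u⟦(1 : ℤ)⟧')) (leftComp Y (φ⟦(1 : ℤ)⟧'))
      (AddMonoidHom.id _)
      (by simp [leftComp_comp_leftComp, ← Functor.map_comp, huε])
      (by simp only [leftComp_comp_leftComp, ← Functor.map_comp, hpu])
      (by simp [leftComp_comp_leftComp, ← Functor.map_comp, hxφ])
      (exact_leftComp_shift₂ hF Y) (exact_leftComp_shift₃ hE Y) (exact_leftComp_shift₂ hE Y)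
      Function.surjective_id (hφ Y hY).2 Function.injective_id

end Cones

/-- Every morphism `E ⟶ F` with `E ∈ S` and cone in `Q` factors through some `E' ⟶ F` with
`E' ∈ S'` and cone in `Q'`: approximations of type `(S, Q)` can be improved to type `(S', Q')`. -/
def Refinable (S Q S' Q' : Set T) : Prop :=
  ∀ ⦃E F : T⦄ (φ : E ⟶ F), E ∈ S → HasConeIn Q φ →
    ∃ (E' : T) (a : E ⟶ E') (φ' : E' ⟶ F), E' ∈ S' ∧ a ≫ φ' = φ ∧ HasConeIn Q' φ'

/-- An approximating sequence of `F`: a sequence `E 0 ⟶ E 1 ⟶ ⋯` with compatible morphisms to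
`F`, such that `E n ∈ S n` and `E n ⟶ F` has a cone in `Q n`. Indexing starts at `0`, and `E 0` is
already an approximation. -/
def HasApproxTower (F : T) (S Q : ℕ → Set T) : Prop :=
  ∃ (E : ℕ → T) (e : ∀ n, E n ⟶ E (n + 1)) (φ : ∀ n, E n ⟶ F),
    (∀ n, e n ≫ φ (n + 1) = φ n) ∧
    ∀ n, ∃ (D : T) (g : F ⟶ D) (h : D ⟶ (E n)⟦(1 : ℤ)⟧),
      Triangle.mk (φ n) g h ∈ distTriang T ∧ E n ∈ S n ∧ D ∈ Q n

section Towers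

variable {F : T} {S Q : ℕ → Set T}

lemma HasApproxTower.approxTriangle (h : HasApproxTower F S Q) (n : ℕ) :
    approxTriangle T F (S n) (Q n) := by
  obtain ⟨E, -, φ, -, hE⟩ := h
  obtain ⟨D, g, δ, hD⟩ := hE n
  exact ⟨E n, D, φ n, g, δ, hD⟩

lemma hasApproxTower_of_refinable (h₀ : approxTriangle T F (S 0) (Q 0))
    (hstep : ∀ n, Refinable (S n) (Q n) (S (n + 1)) (Q (n + 1))) : HasApproxTower F S Q := by
  let Approx (n : ℕ) := {P : Over F // P.left ∈ S n ∧ HasConeIn (Q n) P.hom}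
  have hnext (n : ℕ) (P : Approx n) : ∃ P' : Approx (n + 1), Nonempty (P.1 ⟶ P'.1) := by
    obtain ⟨E', a, φ', hE', ha, hφ'⟩ := hstep n P.1.hom P.2.1 P.2.2
    exact ⟨⟨Over.mk φ', hE', hφ'⟩, ⟨Over.homMk a ha⟩⟩
  choose next hom using hnext
  obtain ⟨E, D, f, g, δ, hT, hE, hD⟩ := h₀
  let P (n : ℕ) : Approx n := n.rec ⟨Over.mk f, hE, D, g, δ, hT, hD⟩ next
  refine ⟨fun n => (P n).1.left, fun n => (hom n (P n)).some.left, fun n => (P n).1.hom,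
    fun n => Over.w (hom n (P n)).some, fun n => ?_⟩
  obtain ⟨hE, D, g, δ, hT, hD⟩ := (P n).2
  exact ⟨D, g, δ, hT, hE, hD⟩

end Towers

section Refinement

variable {S S' 𝒴 𝒴' : Set T}

lemma Refinable.mono {S₀ S₁ Q Q' : Set T} (h : Refinable S Q S' Q') (h₀ : S₀ ⊆ S) (h₁ : S' ⊆ S₁) :
    Refinable S₀ Q S₁ Q' := by
  intro E F φ hE hφ
  obtain ⟨E', a, φ', hE', h⟩ := h φ (h₀ hE) hφ
  exact ⟨E', a, φ', h₁ hE', h⟩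

lemma refinable_isZero {Q' : Set T}
    (happ : ∀ F ∈ lOrth T 𝒴, approxTriangle T F S Q') :
    Refinable {X | IsZero X} (lOrth T 𝒴) S Q' := by
  intro E F φ (hE : IsZero E) hφ
  have hF : F ∈ lOrth T 𝒴 := fun Y hY _ =>
    (hasConeIn_lOrth_iff.1 hφ Y hY).1 (hE.eq_of_src _ _)
  obtain ⟨E', D, f, g, δ, hT, hE', hD⟩ := happ F hF
  exact ⟨E', 0, f, hE', hE.eq_of_src _ _, D, g, δ, hT, hD⟩

-- For `X ⟶ E ⟶ E₁` with `X ∈ R` and `E₁ ∈ S`, refine the induced map from `E₁` to the cone of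
-- `X ⟶ F`, then pull the result back along `F`.
lemma Refinable.starSet (h : Refinable S (lOrth T 𝒴) S' (lOrth T 𝒴')) (R : Set T) :
    Refinable (starSet T R S) (lOrth T 𝒴) (starSet T R S') (lOrth T 𝒴') := by
  rintro E F φ ⟨X, E₁, x, p, δ, hE, hX, hE₁⟩ hφ
  obtain ⟨F₁, q, ε, hF⟩ := distinguished_cocone_triangle (x ≫ φ)
  obtain ⟨u, hpu, huε⟩ := exists_hom₃_of_distTriang hE hF φ rfl
  obtain ⟨E₁', v, w, hE₁', hvw, hw⟩ := h u hE₁ (hφ.hom₃_of_hom₂ hE hF rfl hpu huε)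
  obtain ⟨E', x', p', hE'⟩ := distinguished_cocone_triangle₂ (w ≫ ε)
  obtain ⟨φ', hxφ', hpw⟩ := exists_hom₂_of_distTriang hE' hF w rfl
  obtain ⟨a, -, hpv⟩ := exists_hom₂_of_distTriang hE hE' v (by rw [reassoc_of% hvw, huε])
  have herr : (a ≫ φ' - φ) ≫ q = 0 := by
    rw [Preadditive.sub_comp, Category.assoc, ← hpw, ← reassoc_of% hpv, hvw, hpu, sub_self]
  -- `a` lifts `φ` only up to a map factoring through `X`, which is subtracted.
  obtain ⟨s, hs⟩ : ∃ s : E ⟶ X, a ≫ φ' - φ = s ≫ x ≫ φ :=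
    Triangle.coyoneda_exact₂ _ hF _ herr
  refine ⟨E', a - s ≫ x', φ', ⟨X, E₁', x', p', _, hE', hX, hE₁'⟩, ?_,
    hw.hom₂_of_hom₃ hE' hF hxφ' hpw rfl⟩
  rw [Preadditive.sub_comp, Category.assoc, hxφ', ← hs, sub_sub_cancel]

-- If `B ≅ W ⊞ E`, then `W ⊞ E ⟶ W ⊞ F` has the same cone as `E ⟶ F`; refine it and divide by `W`.
lemma Refinable.smd (h : Refinable S (lOrth T 𝒴) S' (lOrth T 𝒴')) :
    Refinable (smd T S) (lOrth T 𝒴) (smd T S') (lOrth T 𝒴') := by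
  rintro E F φ ⟨B, hB, i, r, hir⟩ hφ
  have : Epi r := (SplitEpi.mk i hir).epi
  obtain ⟨W, c, δ, hBE⟩ := distinguished_cocone_triangle₁ r
  have hδ : δ = 0 := Triangle.mor₃_eq_zero_of_epi₂ _ hBE this
  obtain ⟨F', y, q, hF⟩ := distinguished_cocone_triangle₂ (0 : F ⟶ W⟦(1 : ℤ)⟧)
  obtain ⟨ψ, hcψ, hrφ⟩ := exists_hom₂_of_distTriang hBE hF φ (by rw [comp_zero, hδ])
  obtain ⟨B', a, ψ', hB', haψ', hψ'⟩ :=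
    h ψ hB (hφ.hom₂_of_hom₃ hBE hF hcψ hrφ (by rw [comp_zero, hδ]))
  have hcaψ' : (c ≫ a) ≫ ψ' = y := by rw [Category.assoc, haψ', hcψ]
  have : Mono y := Triangle.mono₁ _ hF rfl
  have : Mono (c ≫ a) := mono_of_mono_fac hcaψ'
  obtain ⟨E', p, ε, hE'⟩ := distinguished_cocone_triangle (c ≫ a)
  obtain ⟨φ', hpφ', hφ'ε⟩ := exists_hom₃_of_distTriang hE' hF ψ' hcaψ'
  obtain ⟨a', hra', -⟩ := exists_hom₃_of_distTriang hBE hE' a rfl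
  refine ⟨E', a', φ', mem_smd_of_mono hE' hB', ?_, hψ'.hom₃_of_hom₂ hE' hF hcaψ' hpφ' hφ'ε⟩
  rw [← cancel_epi r, reassoc_of% hra', hpφ', reassoc_of% haψ', hrφ]

variable [HasCoproducts.{v} T] {U : Set T}

lemma refinable_bigClosure
    (happ : ∀ F ∈ lOrth T 𝒴, approxTriangle T F {X | bigClosure T U X} (lOrth T 𝒴')) :
    Refinable {X | bigClosure T U X} (lOrth T 𝒴) {X | bigClosure T U X} (lOrth T 𝒴') :=
  ((refinable_isZero happ).starSet _).mono (subset_starSet_isZero _) (starSet_bigClosure_subset U)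

lemma refinable_smd_coprodPowBig {k : ℕ}
    (happ : ∀ F ∈ lOrth T 𝒴, approxTriangle T F (smd T (coprodPowBig T U k)) (lOrth T 𝒴'))
    (m : ℕ) : Refinable (smd T (coprodPowBig T U m)) (lOrth T 𝒴)
      (smd T (coprodPowBig T U (k + m))) (lOrth T 𝒴') := by
  suffices h : Refinable (coprodPowBig T U m) (lOrth T 𝒴)
      (smd T (coprodPowBig T U (k + m))) (lOrth T 𝒴') from
    h.smd.mono subset_rfl (smd_smd_subset _)
  induction m with
  | zero => exact refinable_isZero happ
  | succ m ih => exact (ih.starSet (bigAddClosure T U)).mono subset_rfl (starSet_smd_subset _ _)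

end Refinement

section GeneratingSequences

variable [HasCoproducts.{v} T] {G 𝒴 : ℤ → Set T} {A : ℤ}

theorem hasApproxTower_gBarInt
    (happ : ∀ i, ∀ F ∈ lOrth T (𝒴 i),
      approxTriangle T F (gBarInt T G (-A - i) (A - i)) (lOrth T (𝒴 (i + 1))))
    (i : ℤ) (F : T) (hF : F ∈ lOrth T (𝒴 i)) :
    HasApproxTower F (fun n => gBarInt T G (-A - n - i) (A - i))
      (fun n => lOrth T (𝒴 (i + n + 1))) := by
  refine hasApproxTower_of_refinable (by simpa using happ i F hF) fun n => ?_
  have happ' (D : T) (hD : D ∈ lOrth T (𝒴 (i + n + 1))) : approxTriangle T D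
      (gBarInt T G (-A - (n + 1 : ℕ) - i) (A - i)) (lOrth T (𝒴 (i + (n + 1 : ℕ) + 1))) := by
    rw [show i + ((n + 1 : ℕ) : ℤ) + 1 = i + n + 1 + 1 by push_cast; ring]
    exact (happ _ D hD).mono_left (gBarInt_mono G (by lia) (by lia))
  exact (refinable_bigClosure happ').mono (gBarInt_mono G (by lia) le_rfl) subset_rfl

theorem hasApproxTower_gBarIntPow (hA : 0 ≤ A)
    (happ : ∀ i, ∀ F ∈ lOrth T (𝒴 i),
      approxTriangle T F (gBarIntPow T G (-A - i) (A - i) A) (lOrth T (𝒴 (i + 1))))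
    (i : ℤ) (F : T) (hF : F ∈ lOrth T (𝒴 i)) :
    HasApproxTower F (fun n => gBarIntPow T G (-A - n - i) (A - i) ((n + 1) * A))
      (fun n => lOrth T (𝒴 (i + n + 1))) := by
  refine hasApproxTower_of_refinable (by simpa using happ i F hF) fun n => ?_
  have happ' (D : T) (hD : D ∈ lOrth T (𝒴 (i + n + 1))) : approxTriangle T D
      (gBarIntPow T G (-A - (n + 1 : ℕ) - i) (A - i) A)
      (lOrth T (𝒴 (i + (n + 1 : ℕ) + 1))) := by
    rw [show i + ((n + 1 : ℕ) : ℤ) + 1 = i + n + 1 + 1 by push_cast; ring]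
    exact (happ _ D hD).mono_left (gBarIntPow_mono G A (by lia) (by lia))
  have hlength : (((n + 1 : ℕ) + 1 : ℤ) * A).toNat = A.toNat + ((n + 1 : ℤ) * A).toNat := by
    rw [← Int.toNat_add hA (by positivity)]
    congr 1
    push_cast
    ring
  have hstep := refinable_smd_coprodPowBig happ' ((n + 1 : ℤ) * A).toNat
  rw [← hlength] at hstep
  exact hstep.mono (gBarIntPow_mono G _ (by lia) le_rfl) subset_rfl

end GeneratingSequences

theorem statement_7_general [HasCoproducts.{v} T] (G R : ℤ → Set T) (A : ℤ)
    (hR : ∀ n, lOrth T (rOrth T (R n)) = R n) (hA : 0 ≤ A)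
    (happrox : ∀ i : ℤ, ∀ F ∈ R i,
      approxTriangle T F (gBarInt T G (-A - i) (A - i)) (R (i + 1))) :
    ((∀ i j : ℤ, i < j → ∀ F ∈ R i,
        approxTriangle T F (gBarInt T G (-A - j + 1) (A - i)) (R j)) ∧
      ∀ i : ℤ, ∀ F ∈ R i, HasApproxTower F (fun n => gBarInt T G (-A - n - i) (A - i))
        (fun n => R (i + n + 1))) ∧
    ((∀ i : ℤ, ∀ F ∈ R i,
        approxTriangle T F (gBarIntPow T G (-A - i) (A - i) A) (R (i + 1))) →
      (∀ i j : ℤ, i < j → ∀ F ∈ R i,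
        approxTriangle T F (gBarIntPow T G (-A - j + 1) (A - i) ((j - i) * A)) (R j)) ∧
      ∀ i : ℤ, ∀ F ∈ R i,
        HasApproxTower F (fun n => gBarIntPow T G (-A - n - i) (A - i) ((n + 1) * A))
          (fun n => R (i + n + 1))) := by
  obtain ⟨𝒴, rfl⟩ : ∃ 𝒴 : ℤ → Set T, R = fun n => lOrth T (𝒴 n) :=
    ⟨fun n => rOrth T (R n), funext fun n => (hR n).symm⟩
  have exists_eq_add {i j : ℤ} (hij : i < j) : ∃ n : ℕ, j = i + n + 1 :=
    ⟨(j - i - 1).toNat, by lia⟩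
  refine ⟨⟨fun i j hij F hF => ?_, hasApproxTower_gBarInt happrox⟩,
    fun happrox' => ⟨fun i j hij F hF => ?_, hasApproxTower_gBarIntPow hA happrox'⟩⟩ <;>
    obtain ⟨n, rfl⟩ := exists_eq_add hij
  · rw [show -A - (i + n + 1) + 1 = -A - n - i by ring]
    exact (hasApproxTower_gBarInt happrox i F hF).approxTriangle n
  · rw [show -A - (i + n + 1) + 1 = -A - n - i by ring,
      show i + (n : ℤ) + 1 - i = n + 1 by ring]
    exact (hasApproxTower_gBarIntPow hA happrox' i F hF).approxTriangle n


end

theorem statement_7 (G Rm : ℤ → Set C) (A : ℤ)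
    (hcg : CompactlyGenerated C) (hG : IsGenSeq C G) (hR : IsOrthMetric C Rm) (hA : 0 < A)
    (happrox : ∀ i : ℤ, ∀ F ∈ Rm i,
      approxTriangle C F (gBarInt C G (-A - i) (A - i)) (Rm (i + 1))) :
    ((∀ i j : ℤ, i < j → ∀ F ∈ Rm i,
        approxTriangle C F (gBarInt C G (-A - j + 1) (A - i)) (Rm j)) ∧
      (∀ i : ℤ, ∀ F ∈ Rm i,
        ∃ (E : ℕ → C) (e : ∀ n, E n ⟶ E (n + 1)) (φ : ∀ n, E n ⟶ F),
          (∀ n, e n ≫ φ (n + 1) = φ n) ∧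
          ∀ n : ℕ, ∃ (D : C) (g : F ⟶ D) (h : D ⟶ (E n)⟦(1 : ℤ)⟧),
            Triangle.mk (φ n) g h ∈ (distTriang C) ∧
            E n ∈ gBarInt C G (-A - (n : ℤ) - i) (A - i) ∧ D ∈ Rm (i + (n : ℤ) + 1))) ∧
    ((∀ i : ℤ, ∀ F ∈ Rm i,
        approxTriangle C F (gBarIntPow C G (-A - i) (A - i) A) (Rm (i + 1))) →
      (∀ i j : ℤ, i < j → ∀ F ∈ Rm i,
        approxTriangle C F (gBarIntPow C G (-A - j + 1) (A - i) ((j - i) * A)) (Rm j)) ∧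
      (∀ i : ℤ, ∀ F ∈ Rm i,
        ∃ (E : ℕ → C) (e : ∀ n, E n ⟶ E (n + 1)) (φ : ∀ n, E n ⟶ F),
          (∀ n, e n ≫ φ (n + 1) = φ n) ∧
          ∀ n : ℕ, ∃ (D : C) (g : F ⟶ D) (h : D ⟶ (E n)⟦(1 : ℤ)⟧),
            Triangle.mk (φ n) g h ∈ (distTriang C) ∧
            E n ∈ gBarIntPow C G (-A - (n : ℤ) - i) (A - i) (((n : ℤ) + 1) * A) ∧
            D ∈ Rm (i + (n : ℤ) + 1))) :=
  statement_7_general G Rm A hR.orth hA.le happrox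

end GApprox
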